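/- The polynomial X⁸ + 24X⁴ + 16 is irreducible over ℚ. -/

import Mathlib

open Polynomial

/-!
The octic is `(X⁴ + 12)² - 128`, the norm of `X⁴ + 4u²` from `ℚ(√2)` to `ℚ`, where `u = 1 - √2`.
It is irreducible over `ℚ` because `X⁴ + 4u²` is irreducible over `ℚ(√2)`: a quartic `X⁴ - b` can
only be reducible if `b` is a square or `b = -4c⁴`. The first is impossible for `b = -4u²` because
`-1` is not a square in `ℚ(√2)`, and the second would give `u = ±c²`, whereas `±u` has
norm `-1`, which is not a square.
-/

lemma two_ne_zero_of_not_isSquare_neg_one {R : Type*} [Ring R] (h : ¬ IsSquare (-1 : R)) :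
    (2 : R) ≠ 0 :=
  fun h₂ ↦ h ⟨1, by rw [mul_one, neg_eq_iff_add_eq_zero, one_add_one_eq_two, h₂]⟩

section SquareRootExtension

open IntermediateField

variable {K L : Type*} [Field K] [Field L] [Algebra K L] {a : K} {x : L}

lemma adjoinSimple_gen_sq (hx : minpoly K x = X ^ 2 - C a) :
    AdjoinSimple.gen K x ^ 2 = algebraMap K K⟮x⟯ a := by
  have h := minpoly.aeval K (AdjoinSimple.gen K x)
  rw [minpoly_gen, hx] at h
  simpa [sub_eq_zero] using h

lemma exists_eq_add_mul_gen (hx : minpoly K x = X ^ 2 - C a) (b : K⟮x⟯) :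
    ∃ p q : K, b = algebraMap K K⟮x⟯ p + algebraMap K K⟮x⟯ q * AdjoinSimple.gen K x := by
  have hint : IsIntegral K x :=
    minpoly.ne_zero_iff.mp (hx ▸ X_pow_sub_C_ne_zero two_pos a)
  obtain ⟨g, hg, rfl⟩ := (adjoin.powerBasis hint).exists_eq_aeval b
  rw [adjoin.powerBasis_dim, hx, natDegree_X_pow_sub_C] at hg
  refine ⟨g.coeff 0, g.coeff 1, ?_⟩
  rw [adjoin.powerBasis_gen, aeval_eq_sum_range' hg]
  simp [Finset.sum_range_succ, Algebra.smul_def]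

lemma add_mul_gen_inj (hx : minpoly K x = X ^ 2 - C a) {p q r s : K} :
    algebraMap K K⟮x⟯ p + algebraMap K K⟮x⟯ q * AdjoinSimple.gen K x =
      algebraMap K K⟮x⟯ r + algebraMap K K⟮x⟯ s * AdjoinSimple.gen K x ↔ p = r ∧ q = s := by
  refine ⟨fun h ↦ ?_, by rintro ⟨rfl, rfl⟩; rfl⟩
  have hroot : aeval (AdjoinSimple.gen K x) (C (q - s) * X + C (p - r)) = 0 := by
    simp only [map_add, map_mul, aeval_C, aeval_X, map_sub]
    linear_combination h
  have hzero : C (q - s) * X + C (p - r) = 0 := by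
    refine eq_zero_of_dvd_of_natDegree_lt (minpoly.dvd K _ hroot) ?_
    rw [minpoly_gen, hx, natDegree_X_pow_sub_C]
    exact natDegree_linear_le.trans_lt one_lt_two
  have h₀ := congrArg (coeff · 0) hzero
  have h₁ := congrArg (coeff · 1) hzero
  simp only [coeff_add, coeff_C_mul, coeff_X_zero, coeff_X_one, coeff_C_zero, coeff_C_succ,
    coeff_zero, mul_zero, mul_one, zero_add, add_zero, sub_eq_zero] at h₀ h₁
  exact ⟨h₀, h₁⟩

lemma isSquare_add_mul_gen_iff (hx : minpoly K x = X ^ 2 - C a) {r s : K} :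
    IsSquare (algebraMap K K⟮x⟯ r + algebraMap K K⟮x⟯ s * AdjoinSimple.gen K x) ↔
      ∃ p q : K, r = p ^ 2 + a * q ^ 2 ∧ s = 2 * p * q := by
  have sq_add_mul_gen (p q : K) :
      (algebraMap K K⟮x⟯ p + algebraMap K K⟮x⟯ q * AdjoinSimple.gen K x) ^ 2 =
        algebraMap K K⟮x⟯ (p ^ 2 + a * q ^ 2) +
          algebraMap K K⟮x⟯ (2 * p * q) * AdjoinSimple.gen K x := by
    simp only [map_add, map_mul, map_pow, map_ofNat]
    linear_combination algebraMap K K⟮x⟯ q ^ 2 * adjoinSimple_gen_sq hx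
  rw [isSquare_iff_exists_sq]
  constructor
  · rintro ⟨b, hb⟩
    obtain ⟨p, q, rfl⟩ := exists_eq_add_mul_gen hx b
    exact ⟨p, q, (add_mul_gen_inj hx).mp (hb.trans (sq_add_mul_gen p q))⟩
  · rintro ⟨p, q, rfl, rfl⟩
    exact ⟨_, (sq_add_mul_gen p q).symm⟩

lemma adjoinSimple_not_isSquare_neg_one (hx : minpoly K x = X ^ 2 - C a) (h : ¬ IsSquare (-1 : K))
    (ha : ¬ IsSquare (-a)) : ¬ IsSquare (-1 : K⟮x⟯) := by
  intro hsq
  obtain ⟨p, q, hpq, h₀⟩ := (isSquare_add_mul_gen_iff hx (r := -1) (s := 0)).mp (by simpa using hsq)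
  obtain rfl | rfl : p = 0 ∨ q = 0 := by simpa [two_ne_zero_of_not_isSquare_neg_one h] using h₀.symm
  · exact ha ⟨a * q, by linear_combination a * hpq⟩
  · exact h ⟨p, by linear_combination hpq⟩

lemma isSquare_sq_sub_mul_sq_of_isSquare_add_mul_gen (hx : minpoly K x = X ^ 2 - C a) {r s : K}
    (h : IsSquare (algebraMap K K⟮x⟯ r + algebraMap K K⟮x⟯ s * AdjoinSimple.gen K x)) :
    IsSquare (r ^ 2 - a * s ^ 2) := by
  obtain ⟨p, q, rfl, rfl⟩ := (isSquare_add_mul_gen_iff hx).mp h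
  exact ⟨p ^ 2 - a * q ^ 2, by ring⟩

end SquareRootExtension

section PureQuartic

variable {K : Type*} [Field K] {a : K}

lemma X_sq_sub_C_irreducible (ha : ¬ IsSquare a) : Irreducible (X ^ 2 - C a) :=
  X_pow_sub_C_irreducible_of_prime Nat.prime_two fun b hb ↦ ha (hb ▸ IsSquare.sq b)

lemma X_pow_four_sub_C_irreducible (ha : ¬ IsSquare a) (ha' : ∀ c, a ≠ -4 * c ^ 4) :
    Irreducible (X ^ 4 - C a) := by
  have hcomp : (X ^ 4 - C a : K[X]) = (X ^ 2 - C a).comp (X ^ 2) := by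
    simp only [sub_comp, pow_comp, X_comp, C_comp]
    ring
  rw [hcomp]
  refine irreducible_comp (monic_X_pow_sub_C a two_ne_zero) (monic_X_pow 2)
    (X_sq_sub_C_irreducible ha) fun E _ _ x hx ↦ ?_
  rw [Polynomial.map_pow, map_X]
  refine X_sq_sub_C_irreducible fun hsq ↦ ?_
  -- `p + q√a` squares to `√a` iff `p² + aq² = 0` and `2pq = 1`, whence `a = -p² / q² = -4p⁴`.
  obtain ⟨p, q, h₀, h₁⟩ := (isSquare_add_mul_gen_iff hx (r := 0) (s := 1)).mp (by simpa using hsq)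
  exact ha' p (by linear_combination -4 * p ^ 2 * h₀ + a * (1 + 2 * p * q) * h₁)

lemma X_pow_four_add_C_four_mul_sq_irreducible (h : ¬ IsSquare (-1 : K)) (ha : ¬ IsSquare a)
    (ha' : ¬ IsSquare (-a)) : Irreducible (X ^ 4 + C (4 * a ^ 2)) := by
  have h₂ : (2 : K) ≠ 0 := two_ne_zero_of_not_isSquare_neg_one h
  have ha₀ : a ≠ 0 := fun h₀ ↦ ha (h₀ ▸ IsSquare.zero)
  rw [← sub_neg_eq_add, ← C_neg]
  refine X_pow_four_sub_C_irreducible ?_ fun c hc ↦ ?_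
  · rintro ⟨b, hb⟩
    refine h ⟨b / (2 * a), ?_⟩
    field_simp
    linear_combination hb
  · have hsq : a ^ 2 = (c ^ 2) ^ 2 :=
      mul_left_cancel₀ (pow_ne_zero 2 h₂) (by linear_combination -hc)
    obtain rfl | rfl := sq_eq_sq_iff_eq_or_eq_neg.mp hsq
    · exact ha (IsSquare.sq c)
    · exact ha' (by rw [neg_neg]; exact IsSquare.sq c)

end PureQuartic

section NormOctic

open IntermediateField

variable {K : Type*} [Field K] {a r s : K}

/- The octic is the norm of `X⁴ + 4(r + s√a)²`, and the normalization `8rs = -1` makes the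
constant term of that quartic equal to `4(r² + as²) - √a`. -/
lemma X_pow_four_add_C_sq_sub_C_irreducible (hrs : 8 * r * s = -1) (h : ¬ IsSquare (-1 : K))
    (ha : ¬ IsSquare a) (ha' : ¬ IsSquare (-a)) (hnorm : ¬ IsSquare (r ^ 2 - a * s ^ 2)) :
    Irreducible ((X ^ 4 + C (4 * (r ^ 2 + a * s ^ 2))) ^ 2 - C a) := by
  have hcomp : (X ^ 4 + C (4 * (r ^ 2 + a * s ^ 2))) ^ 2 - C a =
      (X ^ 2 - C a).comp (X ^ 4 + C (4 * (r ^ 2 + a * s ^ 2))) := by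
    simp only [sub_comp, pow_comp, X_comp, C_comp]
  rw [hcomp]
  refine irreducible_comp (monic_X_pow_sub_C a two_ne_zero) (monic_X_pow_add_C _ four_ne_zero)
    (X_sq_sub_C_irreducible ha) fun E _ _ x hx ↦ ?_
  set u := algebraMap K K⟮x⟯ r + algebraMap K K⟮x⟯ s * AdjoinSimple.gen K x with hu
  have hu_sq : 4 * u ^ 2 =
      algebraMap K K⟮x⟯ (4 * (r ^ 2 + a * s ^ 2)) - AdjoinSimple.gen K x := by
    have hrs' := congrArg (algebraMap K K⟮x⟯) hrs
    simp only [map_add, map_mul, map_pow, map_ofNat, map_neg, map_one] at hrs' ⊢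
    linear_combination
      4 * algebraMap K K⟮x⟯ s ^ 2 * adjoinSimple_gen_sq hx + AdjoinSimple.gen K x * hrs'
  have hu_pos : ¬ IsSquare u := fun hsq ↦
    hnorm (isSquare_sq_sub_mul_sq_of_isSquare_add_mul_gen hx hsq)
  have hu_neg : ¬ IsSquare (-u) := by
    have hneg : -u = algebraMap K K⟮x⟯ (-r) + algebraMap K K⟮x⟯ (-s) * AdjoinSimple.gen K x := by
      rw [hu, map_neg, map_neg]
      ring
    rw [hneg]
    exact fun hsq ↦ hnorm (by
      simpa only [neg_sq] using isSquare_sq_sub_mul_sq_of_isSquare_add_mul_gen hx hsq)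
  have hmap : (X ^ 4 + C (4 * (r ^ 2 + a * s ^ 2))).map (algebraMap K K⟮x⟯) -
      C (AdjoinSimple.gen K x) = X ^ 4 + C (4 * u ^ 2) := by
    rw [Polynomial.map_add, Polynomial.map_pow, map_X, map_C, hu_sq, C_sub, add_sub_assoc]
  rw [hmap]
  exact X_pow_four_add_C_four_mul_sq_irreducible
    (adjoinSimple_not_isSquare_neg_one hx h ha') hu_pos hu_neg

end NormOctic

/-- The polynomial `X⁸ + 24X⁴ + 16` is irreducible over `ℚ`. -/
theorem octic1_irreducible : Irreducible (X^8 + 24*X^4 + 16 : ℚ[X]) := by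
  have hoctic : (X ^ 8 + 24 * X ^ 4 + 16 : ℚ[X]) =
      (X ^ 4 + C (4 * (1 ^ 2 + 128 * (-1 / 8) ^ 2))) ^ 2 - C 128 := by
    norm_num [map_ofNat C]
    ring
  rw [hoctic]
  exact X_pow_four_add_C_sq_sub_C_irreducible (by norm_num) (by norm_num) (by norm_num)
    (by norm_num) (by norm_num)
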